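/- Let m ≥ 2 be an integer and N ≥ 4 a real number. Then ∫_{[1/4,1/2]×[−N,N]^{m−1}×[1,N]×[−N,N]^{m−1}} (x^0_1 + x^1_1)/|x^0 + x^1|^{m+1} d(x^0, x^1) ≥ (8m)^{−m−1} N^{m−1} ln(N/4), where the integration variable is (x^0, x^1) ∈ ℝ^m × ℝ^m with x^0 ∈ [1/4,1/2]×[−N,N]^{m−1} and x^1 ∈ [1,N]×[−N,N]^{m−1}, and |·| denotes the Euclidean norm on ℝ^m. (In particular, this lower bound grows faster in N than N^{m−1}, which yields the failure of the singular Brascamp–Lieb L^p bound below the threshold 2^{m−1}.) -/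

import Mathlib

open MeasureTheory Matrix
open scoped ENNReal NNReal BigOperators

noncomputable section

namespace SBL

/-- The set of corners of the `m`-dimensional cube: functions `{1,…,m} → {0,1}`. -/
abbrev Corner (m : ℕ) := Fin m → Fin 2

/-- Index type for `ℝ^{2m}`: coordinates `x^0_i` (left) and `x^1_i` (right). -/
abbrev Idx (m : ℕ) := Fin m ⊕ Fin m

/-- The coordinate of `ℝ^{2m}` selected by the corner `j` at position `i`. -/
def sel {m : ℕ} (j : Corner m) (i : Fin m) : Idx m :=
  if j i = 0 then Sum.inl i else Sum.inr i

/-- The projection `Π_j : ℝ^{2m} → ℝ^m`, `Π_j x = (x_1^{j(1)},…,x_m^{j(m)})`. -/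
def proj {m : ℕ} (j : Corner m) (x : Idx m → ℝ) : Fin m → ℝ := fun i => x (sel j i)

/-- The projection `Π_j` as an `m × 2m` matrix. -/
def projM {m : ℕ} (j : Corner m) : Matrix (Fin m) (Idx m) ℝ :=
  Matrix.of fun i k => if k = sel j i then 1 else 0

/-- `A_j := Π_j J`, the `m × m` matrix obtained by applying `Π_j` to (the columns of) a
`2m × m` matrix `J`, i.e. selecting rows of `J` according to the corner `j`. -/
def Amat {m : ℕ} (J : Matrix (Idx m) (Fin m) ℝ) (j : Corner m) : Matrix (Fin m) (Fin m) ℝ :=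
  Matrix.of fun i k => J (sel j i) k

/-- Euclidean norm on a finite pi type. -/
def en {ι : Type*} [Fintype ι] (x : ι → ℝ) : ℝ := Real.sqrt (∑ i, (x i) ^ 2)

/-- Operator norm of a matrix with respect to the Euclidean norms. -/
def opNorm {ι κ : Type*} [Fintype ι] [Fintype κ] [DecidableEq κ] (A : Matrix ι κ ℝ) : ℝ :=
  ‖LinearMap.toContinuousLinearMap (Matrix.toEuclideanLin A)‖

/-- `Δ`-regularity of a square matrix: `max(‖A‖, |det A|⁻¹) ≤ Δ` (in particular `det A ≠ 0`). -/
def IsReg {m : ℕ} (Δ : ℝ) (A : Matrix (Fin m) (Fin m) ℝ) : Prop :=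
  opNorm A ≤ Δ ∧ A.det ≠ 0 ∧ |A.det|⁻¹ ≤ Δ

/-- A Calderón–Zygmund kernel of order `n` in `ℝ^m`, given by its multiplier `K̂` on
`ℝ^m ∖ {0}`: it is `n` times continuously differentiable there and satisfies the symbol
estimates `‖D^k K̂(η)‖ ≤ |η|^{-k}` for all `k ≤ n`. -/
def IsCZ {m : ℕ} (n : ℕ) (Khat : (Fin m → ℝ) → ℂ) : Prop :=
  ContDiffOn ℝ n Khat {0}ᶜ ∧
  ∀ k : ℕ, k ≤ n → ∀ η : Fin m → ℝ, η ≠ 0 →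
    ‖iteratedFDerivWithin ℝ k Khat {0}ᶜ η‖ ≤ (en η) ^ (-(k : ℝ))

/-- Fourier transform of a (nice) function on `ℝ^{2m}`. -/
def fourierT {m : ℕ} (φ : (Idx m → ℝ) → ℝ) (ξ : Idx m → ℝ) : ℂ :=
  ∫ x : Idx m → ℝ, Complex.exp (-2 * Real.pi * Complex.I * (∑ k, x k * ξ k)) * (φ x : ℂ)

/-- The principal value `p.v. ∫_{ℝ^{2m}} (∏_j F_j(Π_j x)) K(Πx) dx`, defined as
`∫_{ℝ^m} φ̂(−Π^T η) K̂(η) dη` with `φ = ∏_j F_j ∘ Π_j`. -/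
def pv {m : ℕ} (P : Matrix (Fin m) (Idx m) ℝ) (Khat : (Fin m → ℝ) → ℂ)
    (F : Corner m → (Fin m → ℝ) → ℝ) : ℂ :=
  ∫ η : Fin m → ℝ, fourierT (fun x => ∏ j, F j (proj j x)) (-(P.transpose.mulVec η)) * Khat η

/-- Upper `m×m` block `J^0` of a `2m×m` matrix. -/
def Jb0 {m : ℕ} (J : Matrix (Idx m) (Fin m) ℝ) : Matrix (Fin m) (Fin m) ℝ :=
  J.submatrix Sum.inl id

/-- Lower `m×m` block `J^1` of a `2m×m` matrix. -/
def Jb1 {m : ℕ} (J : Matrix (Idx m) (Fin m) ℝ) : Matrix (Fin m) (Fin m) ℝ :=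
  J.submatrix Sum.inr id

/-- `Π^J := (I, −J^0 (J^1)⁻¹)`. -/
def PiJ {m : ℕ} (J : Matrix (Idx m) (Fin m) ℝ) : Matrix (Fin m) (Idx m) ℝ :=
  Matrix.fromCols 1 (-(Jb0 J * (Jb1 J)⁻¹))

/-- The dyadic cube with parameters `Q = (k, n)`: `∏_i [2^k n_i, 2^k (n_i+1))`. -/
def dC {m : ℕ} (Q : ℤ × (Fin m → ℤ)) : Set (Fin m → ℝ) :=
  {x | ∀ i, (2:ℝ)^Q.1 * (Q.2 i : ℝ) ≤ x i ∧ x i < (2:ℝ)^Q.1 * ((Q.2 i : ℝ) + 1)}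

/-- `Q*`: the cube with the same center as `Q` and three times the side length. -/
def dCstar {m : ℕ} (Q : ℤ × (Fin m → ℤ)) : Set (Fin m → ℝ) :=
  {x | ∀ i, (2:ℝ)^Q.1 * ((Q.2 i : ℝ) - 1) ≤ x i ∧ x i < (2:ℝ)^Q.1 * ((Q.2 i : ℝ) + 2)}

/-- A (1/2-)sparse collection of dyadic cubes. -/
def IsSparse {m : ℕ} (S : Set (ℤ × (Fin m → ℤ))) : Prop :=
  ∀ Q ∈ S,
    (∑' Q' : {q : ℤ × (Fin m → ℤ) // q ∈ S ∧ dC q ⊆ dC Q}, volume (dC Q'.val)) ≤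
      2 * volume (dC Q)

/-- The average `[F]_S := (|S|⁻¹ ∫_S |F|^{2^{m-1}})^{2^{1-m}}`. -/
def avg {m : ℕ} (S : Set (Fin m → ℝ)) (F : (Fin m → ℝ) → ℝ) : ℝ :=
  (((volume S).toReal)⁻¹ * ∫ x in S, |F x| ^ (2^(m-1) : ℕ)) ^ ((2:ℝ) ^ ((1:ℤ) - (m:ℤ)))

/-- The closed axis-parallel box `∏_i [a_i, b_i]`. -/
def box {m : ℕ} (a b : Fin m → ℝ) : Set (Fin m → ℝ) := {x | ∀ i, a i ≤ x i ∧ x i ≤ b i}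

/-- Reciprocal eccentricity `ε_R = (min_i |I_i|)/(max_i |I_i|)` of the box `∏_i [a_i,b_i]`. -/
def ecc {m : ℕ} (a b : Fin m → ℝ) : ℝ := (⨅ i, (b i - a i)) / (⨆ i, (b i - a i))

/-- Modified strong maximal function evaluated on a set `S`:
`sup { (ε_R^α)^{2^{1-m}} [F]_R : R ∈ ℛ, S ⊆ R }` (as an extended real). -/
def Mal {m : ℕ} (α : ℝ) (F : (Fin m → ℝ) → ℝ) (S : Set (Fin m → ℝ)) : ℝ≥0∞ :=
  ⨆ (a : Fin m → ℝ) (b : Fin m → ℝ) (_ : ∀ i, a i < b i) (_ : S ⊆ box a b),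
    ENNReal.ofReal ((ecc a b ^ α) ^ ((2:ℝ) ^ ((1:ℤ) - (m:ℤ))) * avg (box a b) F)

/-- `M_α(F)(A𝒯) := sup_{Q ∈ 𝒯} M_α(F)(AQ)`. -/
def MalTree {m : ℕ} (α : ℝ) (F : (Fin m → ℝ) → ℝ) (A : Matrix (Fin m) (Fin m) ℝ)
    (T : Set (ℤ × (Fin m → ℤ))) : ℝ≥0∞ :=
  ⨆ Q ∈ T, Mal α F (A.mulVec '' dC Q)

/-- A convex tree of dyadic cubes with top cube `Qt`. -/
def ConvexTree {m : ℕ} (T : Set (ℤ × (Fin m → ℤ))) (Qt : ℤ × (Fin m → ℤ)) : Prop :=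
  Qt ∈ T ∧ (∀ Q ∈ T, dC Q ⊆ dC Qt) ∧
  ∀ Q ∈ T, ∀ Q' : ℤ × (Fin m → ℤ), dC Q ⊆ dC Q' → dC Q' ⊆ dC Qt → Q' ∈ T

/-- The Gaussian `g(x) = e^{−π|x|²}` on `ℝ^{2m}`. -/
def gss {m : ℕ} (x : Idx m → ℝ) : ℝ := Real.exp (-Real.pi * ∑ k, (x k) ^ 2)

/-- The mixed partial derivative `∂^0_i ∂^1_i g`. -/
def ddg {m : ℕ} (i : Fin m) (x : Idx m → ℝ) : ℝ :=
  fderiv ℝ (fun y : Idx m → ℝ => fderiv ℝ gss y (Pi.single (Sum.inl i) (1:ℝ))) x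
    (Pi.single (Sum.inr i) (1:ℝ))

/-- Isotropic `L¹` dilation on `ℝ^{2m}`: `φ_t(x) = t^{-2m} φ(t⁻¹ x)`. -/
def dil {m : ℕ} (t : ℝ) (φ : (Idx m → ℝ) → ℝ) (x : Idx m → ℝ) : ℝ :=
  (t ^ (2*m))⁻¹ * φ (t⁻¹ • x)

/-- Matrix dilation: `φ_D(x) = (det D)⁻¹ φ(D⁻¹ x)`. -/
def dilM {m : ℕ} (D : Matrix (Idx m) (Idx m) ℝ) (φ : (Idx m → ℝ) → ℝ) (x : Idx m → ℝ) : ℝ :=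
  (D.det)⁻¹ * φ (D⁻¹.mulVec x)

/-- The region `Ω_𝒯 = ∪_{Q∈𝒯} Q × (ℓ(Q)/2, ℓ(Q))` in the upper half space. -/
def Omega {m : ℕ} (T : Set (ℤ × (Fin m → ℤ))) : Set ((Fin m → ℝ) × ℝ) :=
  ⋃ Q ∈ T, (dC Q) ×ˢ Set.Ioo ((2:ℝ)^Q.1 / 2) ((2:ℝ)^Q.1)

/-- The localized form `Λ_𝒯((F_j)_j)`. -/
def LambdaT {m : ℕ} (J : Matrix (Idx m) (Fin m) ℝ) (T : Set (ℤ × (Fin m → ℤ)))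
    (c : ℝ → ℂ) (u : Idx m → ℝ) (i : Fin m) (F : Corner m → (Fin m → ℝ) → ℝ) : ℂ :=
  ∫ z in Omega T, c z.2 * Complex.ofReal ((1 + en u ^ (4*m))⁻¹ * (z.2)⁻¹ *
    ∫ x : Idx m → ℝ, (∏ j, F j (proj j x)) * dil z.2 (ddg i) (x - J.mulVec z.1 + z.2 • u))

/-- `T_k := ∪ {Q ∈ 𝒯 : ℓ(Q) = 2^k}`. -/
def Tkset {m : ℕ} (T : Set (ℤ × (Fin m → ℤ))) (k : ℤ) : Set (Fin m → ℝ) :=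
  ⋃ Q ∈ {q ∈ T | q.1 = k}, dC Q

/-- The form `Λ̃_𝒯((F_j)_j)` with localization in the `x` variables. -/
def LambdaTilde {m : ℕ} (J : Matrix (Idx m) (Fin m) ℝ) (T : Set (ℤ × (Fin m → ℤ)))
    (c : ℝ → ℂ) (u : Idx m → ℝ) (i : Fin m) (F : Corner m → (Fin m → ℝ) → ℝ) : ℂ :=
  ∑' k : ℤ, ∫ t in Set.Ioc ((2:ℝ)^(k-1)) ((2:ℝ)^k),
    c t * Complex.ofReal ((1 + en u ^ (4*m))⁻¹ * t⁻¹ *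
      ∫ p : Fin m → ℝ, ∫ x : Idx m → ℝ,
        (∏ j, Set.indicator ((Amat J j).mulVec '' Tkset T k) (F j) (proj j x)) *
          dil t (ddg i) (x - J.mulVec p + t • u))

/-- The form `Λ(𝒯,J,K)((F_j)_j)` from the induction proposition. -/
def LambdaK {m : ℕ} (J : Matrix (Idx m) (Fin m) ℝ) (T : Set (ℤ × (Fin m → ℤ)))
    (K : ℝ → (Idx m → ℝ) → ℂ) (F : Corner m → (Fin m → ℝ) → ℝ) : ℂ :=
  ∑' k : ℤ, ∫ x : Idx m → ℝ,
    Complex.ofReal (∏ j, Set.indicator ((Amat J j).mulVec '' Tkset T k) (F j) (proj j x)) *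
      ∫ t in Set.Ioc ((2:ℝ)^(k-1)) ((2:ℝ)^k), K t x * (t : ℂ)⁻¹

/-- The reflected corner `i∗j`, differing from `j` exactly at position `i`. -/
def istar {m : ℕ} (i : Fin m) (j : Corner m) : Corner m :=
  fun k => if k = i then 1 - j i else j k

/-- The diagonal matrix `Θ̃` with entry 0 at positions `i ≤ l` and 1 at positions `i > l`
(1-based), i.e. 0 for `i < l` and 1 otherwise in 0-based indexing. -/
def Th {m : ℕ} (l : ℕ) : Matrix (Fin m) (Fin m) ℝ :=
  Matrix.diagonal fun i => if (i : ℕ) < l then 0 else 1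

/-- The block diagonal matrix `Θ = diag(Θ̃, Θ̃)`. -/
def ThB {m : ℕ} (l : ℕ) : Matrix (Idx m) (Idx m) ℝ :=
  Matrix.diagonal (Sum.elim (fun i : Fin m => if (i:ℕ) < l then (0:ℝ) else 1)
    (fun i : Fin m => if (i:ℕ) < l then (0:ℝ) else 1))

end SBL

namespace SBL

/-- Integrating a function of the first coordinate over a truncated cone of `ℝ^{n+1}`. -/
theorem setLIntegral_cone (n : ℕ) (a b : ℝ) (h : ℝ → ℝ≥0∞) (hh : Measurable h) :
    ∫⁻ y in {y : Fin (n + 1) → ℝ |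
        y 0 ∈ Set.Icc a b ∧ ∀ i : Fin n, -(y 0 / 2) ≤ y i.succ ∧ y i.succ ≤ y 0 / 2}, h (y 0) =
      ∫⁻ t in Set.Icc a b, h t * ENNReal.ofReal t ^ n := by
  have hmeas : MeasurableSet {p : ℝ × (Fin n → ℝ) |
      p.1 ∈ Set.Icc a b ∧ ∀ i : Fin n, -(p.1 / 2) ≤ p.2 i ∧ p.2 i ≤ p.1 / 2} := by
    refine (measurable_fst measurableSet_Icc).inter ?_
    change MeasurableSet {p : ℝ × (Fin n → ℝ) | ∀ i : Fin n, -(p.1 / 2) ≤ p.2 i ∧ p.2 i ≤ p.1 / 2}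
    rw [Set.ofPred_forall]
    refine MeasurableSet.iInter fun i => ?_
    rw [Set.ofPred_and]
    refine MeasurableSet.inter (measurableSet_le ?_ ?_) (measurableSet_le ?_ ?_) <;> fun_prop
  have hmp := volume_preserving_piFinSuccAbove (fun _ : Fin (n + 1) => ℝ) 0
  have h1 := hmp.setLIntegral_comp_preimage hmeas (f := fun p => h p.1)
    (hh.comp measurable_fst)
  have h2 : (MeasurableEquiv.piFinSuccAbove (fun _ : Fin (n + 1) => ℝ) 0) ⁻¹'
      {p : ℝ × (Fin n → ℝ) |
        p.1 ∈ Set.Icc a b ∧ ∀ i : Fin n, -(p.1 / 2) ≤ p.2 i ∧ p.2 i ≤ p.1 / 2} =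
      {y : Fin (n + 1) → ℝ |
        y 0 ∈ Set.Icc a b ∧ ∀ i : Fin n, -(y 0 / 2) ≤ y i.succ ∧ y i.succ ≤ y 0 / 2} := by
    ext y
    simp [Fin.tail]
  rw [h2] at h1
  refine h1.trans ?_
  rw [← lintegral_indicator hmeas, Measure.volume_eq_prod,
    lintegral_prod _ (Measurable.aemeasurable (Measurable.indicator (by fun_prop) hmeas)),
    ← lintegral_indicator measurableSet_Icc]
  refine lintegral_congr fun t => ?_
  by_cases ht : t ∈ Set.Icc a b
  · have hpt : ∀ w : Fin n → ℝ, Set.indicator {p : ℝ × (Fin n → ℝ) |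
        p.1 ∈ Set.Icc a b ∧ ∀ i : Fin n, -(p.1 / 2) ≤ p.2 i ∧ p.2 i ≤ p.1 / 2}
        (fun p => h p.1) (t, w) =
        Set.indicator (Set.Icc (fun _ => -(t / 2)) (fun _ => t / 2)) (fun _ => h t) w := by
      intro w
      simp only [Set.indicator, Set.mem_ofPred_eq, ht, true_and]
      simp only [Set.mem_Icc, Pi.le_def, forall_and]
    simp_rw [hpt]
    rw [lintegral_indicator measurableSet_Icc, setLIntegral_const, Real.volume_Icc_pi]
    simp [ht]
  · simp only [Set.indicator, Set.mem_ofPred_eq, ht, false_and, if_false, lintegral_zero]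

theorem setLIntegral_Icc_inv (a b c : ℝ) (ha : 0 < a) (hab : a ≤ b) (hc : 0 ≤ c) :
    ∫⁻ t in Set.Icc a b, ENNReal.ofReal (c * t⁻¹) = ENNReal.ofReal (c * Real.log (b / a)) := by
  rw [← ofReal_integral_eq_lintegral_ofReal, integral_Icc_eq_integral_Ioc,
    ← intervalIntegral.integral_of_le hab, intervalIntegral.integral_const_mul,
    integral_inv_of_pos ha (ha.trans_le hab)]
  · refine ContinuousOn.integrableOn_Icc (continuousOn_const.mul ?_)
    exact continuousOn_inv₀.mono fun t ht => (ha.trans_le ht.1).ne'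
  · refine (ae_restrict_iff' measurableSet_Icc).2 (ae_of_all _ fun t ht => ?_)
    exact mul_nonneg hc (inv_nonneg.2 (ha.le.trans ht.1))

/-- The integral of `t^{-(n+1)}` over a truncated cone is logarithmic. -/
theorem setLIntegral_cone_inv_pow (n : ℕ) (a b c : ℝ) (ha : 0 < a) (hab : a ≤ b)
    (hc : 0 ≤ c) :
    ∫⁻ y in {y : Fin (n + 1) → ℝ |
        y 0 ∈ Set.Icc a b ∧ ∀ i : Fin n, -(y 0 / 2) ≤ y i.succ ∧ y i.succ ≤ y 0 / 2},
        ENNReal.ofReal (c * (y 0 ^ (n + 1))⁻¹) = ENNReal.ofReal (c * Real.log (b / a)) := by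
  rw [setLIntegral_cone n a b (fun t => ENNReal.ofReal (c * (t ^ (n + 1))⁻¹)) (by fun_prop),
    ← setLIntegral_Icc_inv a b c ha hab hc]
  refine setLIntegral_congr_fun measurableSet_Icc fun t ht => ?_
  have ht0 : 0 < t := ha.trans_le ht.1
  rw [← ENNReal.ofReal_pow ht0.le, ← ENNReal.ofReal_mul (by positivity)]
  congr 1
  rw [pow_succ]
  field_simp

theorem le_en {n : ℕ} (y : Fin (n + 1) → ℝ) : y 0 ≤ en y := by
  refine Real.le_sqrt_of_sq_le ?_
  exact Finset.single_le_sum (f := fun i => y i ^ 2) (fun i _ => sq_nonneg _)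
    (Finset.mem_univ 0)

theorem en_le_card_mul {n : ℕ} (y : Fin (n + 1) → ℝ) (h0 : 0 ≤ y 0)
    (h : ∀ i, |y i| ≤ y 0) : en y ≤ (n + 1) * y 0 := by
  refine Real.sqrt_le_iff.2 ⟨by positivity, ?_⟩
  have h1 : ∑ i, y i ^ 2 ≤ ∑ _i : Fin (n + 1), y 0 ^ 2 :=
    Finset.sum_le_sum fun i _ => sq_le_sq.2 ((h i).trans (le_abs_self _))
  have h2 : ∑ _i : Fin (n + 1), y 0 ^ 2 = (n + 1) * y 0 ^ 2 := by simp
  have h3 : (0 : ℝ) ≤ n := n.cast_nonneg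
  nlinarith [mul_nonneg h3 (sq_nonneg (y 0)), mul_nonneg (mul_nonneg h3 h3) (sq_nonneg (y 0))]

/-- Lower bound for the integrand on the cone `|y_i| ≤ y_0`. -/
theorem inv_pow_le_div_en {n : ℕ} (y : Fin (n + 1) → ℝ) (h0 : 0 < y 0)
    (h : ∀ i, |y i| ≤ y 0) :
    (((n : ℝ) + 1) ^ (n + 2))⁻¹ * (y 0 ^ (n + 1))⁻¹ ≤ y 0 / en y ^ (n + 2) := by
  have hen : 0 < en y := h0.trans_le (le_en y)
  calc (((n : ℝ) + 1) ^ (n + 2))⁻¹ * (y 0 ^ (n + 1))⁻¹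
      = y 0 / ((n + 1) * y 0) ^ (n + 2) := by
        rw [mul_pow, pow_succ (y 0) (n + 1)]
        field_simp
    _ ≤ y 0 / en y ^ (n + 2) := by
        gcongr
        exact en_le_card_mul y h0.le h

/-- The domain of integration of the counterexample integral, as a product of boxes. -/
def counterDomain (n : ℕ) (N : ℝ) : Set ((Fin (n + 1) → ℝ) × (Fin (n + 1) → ℝ)) :=
  Set.Icc (Fin.cons (1 / 4) fun _ => -N) (Fin.cons (1 / 2) fun _ => N) ×ˢ
    Set.Icc (Fin.cons 1 fun _ => -N) (Fin.cons N fun _ => N)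

theorem mem_counterDomain {n : ℕ} {N : ℝ} {z : (Fin (n + 1) → ℝ) × (Fin (n + 1) → ℝ)} :
    z ∈ counterDomain n N ↔
      ((1 / 4 ≤ z.1 0 ∧ z.1 0 ≤ 1 / 2) ∧ ∀ i : Fin n, -N ≤ z.1 i.succ ∧ z.1 i.succ ≤ N) ∧
      (1 ≤ z.2 0 ∧ z.2 0 ≤ N) ∧ ∀ i : Fin n, -N ≤ z.2 i.succ ∧ z.2 i.succ ≤ N := by
  simp only [counterDomain, Set.mem_prod, Set.mem_Icc, Pi.le_def, Fin.forall_fin_succ,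
    Fin.cons_zero, Fin.cons_succ, forall_and]
  tauto

theorem integrableOn_counterDomain (n : ℕ) (N : ℝ) :
    IntegrableOn (fun z : (Fin (n + 1) → ℝ) × (Fin (n + 1) → ℝ) =>
      (z.1 0 + z.2 0) / en (z.1 + z.2) ^ (n + 2)) (counterDomain n N) := by
  refine ContinuousOn.integrableOn_compact (isCompact_Icc.prod isCompact_Icc) ?_
  refine ContinuousOn.div (by fun_prop) (by unfold en; fun_prop) fun z hz => ?_
  obtain ⟨⟨⟨h1, -⟩, -⟩, ⟨h2, -⟩, -⟩ := mem_counterDomain.1 hz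
  have h3 := le_en (z.1 + z.2)
  simp only [Pi.add_apply] at h3
  exact (pow_pos (by linarith) _).ne'

theorem volume_slab (n : ℕ) (N : ℝ) (hN : 0 ≤ N) :
    volume (Set.Icc (Fin.cons (1 / 4) fun _ => -(N / 2) : Fin (n + 1) → ℝ)
      (Fin.cons (1 / 2) fun _ => N / 2)) = ENNReal.ofReal (1 / 4 * N ^ n) := by
  rw [Real.volume_Icc_pi, Fin.prod_univ_succ, ENNReal.ofReal_mul (by norm_num),
    ENNReal.ofReal_pow hN]
  simp only [Fin.cons_zero, Fin.cons_succ, Finset.prod_const, Finset.card_univ, Fintype.card_fin]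
  congr 2
  · norm_num
  · congr 1
    ring

theorem setLIntegral_counterDomain_ge (n : ℕ) (N : ℝ) (hN : 4 ≤ N) :
    ENNReal.ofReal (1 / 4 * N ^ n * ((((n : ℝ) + 1) ^ (n + 2))⁻¹ * Real.log (N / (3 / 2)))) ≤
      ∫⁻ z in counterDomain n N,
        ENNReal.ofReal ((z.1 0 + z.2 0) / en (z.1 + z.2) ^ (n + 2)) := by
  set A : Set (Fin (n + 1) → ℝ) :=
    Set.Icc (Fin.cons (1 / 4) fun _ => -(N / 2)) (Fin.cons (1 / 2) fun _ => N / 2) with hA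
  set C : Set (Fin (n + 1) → ℝ) := {y | y 0 ∈ Set.Icc (3 / 2) N ∧
    ∀ i : Fin n, -(y 0 / 2) ≤ y i.succ ∧ y i.succ ≤ y 0 / 2} with hC
  set G : (Fin (n + 1) → ℝ) → ℝ≥0∞ := C.indicator fun y =>
    ENNReal.ofReal ((((n : ℝ) + 1) ^ (n + 2))⁻¹ * (y 0 ^ (n + 1))⁻¹) with hG
  have hAm : MeasurableSet A := measurableSet_Icc
  have hCm : MeasurableSet C := by
    refine MeasurableSet.inter ((measurable_pi_apply 0) measurableSet_Icc) ?_
    change MeasurableSet {y : Fin (n + 1) → ℝ |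
      ∀ i : Fin n, -(y 0 / 2) ≤ y i.succ ∧ y i.succ ≤ y 0 / 2}
    rw [Set.ofPred_forall]
    refine MeasurableSet.iInter fun i => ?_
    rw [Set.ofPred_and]
    refine MeasurableSet.inter (measurableSet_le ?_ ?_) (measurableSet_le ?_ ?_) <;> fun_prop
  have hGm : Measurable G := Measurable.indicator (by fun_prop) hCm
  have hGint : ∫⁻ y, G y =
      ENNReal.ofReal ((((n : ℝ) + 1) ^ (n + 2))⁻¹ * Real.log (N / (3 / 2))) := by
    rw [hG, lintegral_indicator hCm]
    exact setLIntegral_cone_inv_pow n _ _ _ (by norm_num) (by linarith) (by positivity)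
  have hprod : ∫⁻ z : (Fin (n + 1) → ℝ) × (Fin (n + 1) → ℝ),
      A.indicator 1 z.1 * G (z.1 + z.2) = volume A * ∫⁻ y, G y := by
    rw [Measure.volume_eq_prod, lintegral_prod _ (by
      refine Measurable.aemeasurable (Measurable.mul ?_ (hGm.comp (by fun_prop)))
      exact (measurable_one.indicator hAm).comp measurable_fst)]
    have hinner : ∀ x : Fin (n + 1) → ℝ,
        ∫⁻ y, A.indicator 1 x * G (x + y) = A.indicator 1 x * ∫⁻ y, G y := fun x => by
      rw [lintegral_const_mul _ (by fun_prop), lintegral_add_left_eq_self]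
    simp_rw [hinner]
    rw [lintegral_mul_const _ (measurable_one.indicator hAm), lintegral_indicator_one hAm]
  rw [ENNReal.ofReal_mul (by positivity), ← volume_slab n N (by linarith), ← hGint, ← hprod,
    ← lintegral_indicator (show MeasurableSet (counterDomain n N) from
      measurableSet_Icc.prod measurableSet_Icc)]
  refine lintegral_mono fun z => ?_
  by_cases hzA : z.1 ∈ A
  swap
  · simp [hzA]
  by_cases hzC : z.1 + z.2 ∈ C
  swap
  · simp [hG, hzC]
  obtain ⟨⟨h1, h2⟩, h3⟩ := id hzC
  have hzA' := hzA
  simp only [hA, Set.mem_Icc, Pi.le_def, Fin.forall_fin_succ, Fin.cons_zero,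
    Fin.cons_succ] at hzA'
  obtain ⟨⟨h4, h5⟩, h6, h7⟩ := hzA'
  simp only [Pi.add_apply] at h1 h2 h3
  have hz : z ∈ counterDomain n N := by
    refine mem_counterDomain.2 ⟨⟨⟨h4, h6⟩, fun i => ⟨?_, ?_⟩⟩, ⟨?_, ?_⟩, fun i => ⟨?_, ?_⟩⟩ <;>
      first | linarith | linarith [h5 i, h7 i, (h3 i).1, (h3 i).2]
  rw [Set.indicator_of_mem hzA, Set.indicator_of_mem hz, hG, Set.indicator_of_mem hzC,
    Pi.one_apply, one_mul]
  refine ENNReal.ofReal_le_ofReal (inv_pow_le_div_en (z.1 + z.2) ?_ ?_)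
  · simp only [Pi.add_apply]
    linarith
  · refine Fin.forall_fin_succ.2 ⟨(abs_of_pos ?_).le, fun i => abs_le.2 ⟨?_, ?_⟩⟩ <;>
      simp only [Pi.add_apply]
    · linarith
    · linarith [(h3 i).1]
    · linarith [(h3 i).2]

/-- The lower bound for the counterexample integral in the proof of sharpness
(Section 6): the integral over
`[1/4,1/2]×[−N,N]^{m−1} × [1,N]×[−N,N]^{m−1}` of `(x⁰₁+x¹₁)/|x⁰+x¹|^{m+1}`
is at least `(8m)^{−m−1} N^{m−1} log(N/4)`. -/
theorem statement18 (m : ℕ) (hm : 2 ≤ m) (N : ℝ) (hN : 4 ≤ N) :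
    ((8 * (m:ℝ)) ^ (m+1))⁻¹ * N ^ (m-1) * Real.log (N / 4) ≤
      ∫ z in {z : (Fin m → ℝ) × (Fin m → ℝ) |
          (∀ i : Fin m, if (i:ℕ) = 0 then (1/4 ≤ z.1 i ∧ z.1 i ≤ 1/2)
            else (-N ≤ z.1 i ∧ z.1 i ≤ N)) ∧
          (∀ i : Fin m, if (i:ℕ) = 0 then (1 ≤ z.2 i ∧ z.2 i ≤ N)
            else (-N ≤ z.2 i ∧ z.2 i ≤ N))},
        (z.1 ⟨0, by omega⟩ + z.2 ⟨0, by omega⟩) / (en (z.1 + z.2)) ^ (m+1) := by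
  obtain ⟨n, rfl⟩ : ∃ n, m = n + 1 := ⟨m - 1, by omega⟩
  have hset : {z : (Fin (n + 1) → ℝ) × (Fin (n + 1) → ℝ) |
      (∀ i : Fin (n + 1), if (i : ℕ) = 0 then (1 / 4 ≤ z.1 i ∧ z.1 i ≤ 1 / 2)
        else (-N ≤ z.1 i ∧ z.1 i ≤ N)) ∧
      (∀ i : Fin (n + 1), if (i : ℕ) = 0 then (1 ≤ z.2 i ∧ z.2 i ≤ N)
        else (-N ≤ z.2 i ∧ z.2 i ≤ N))} = counterDomain n N := by
    ext z
    rw [mem_counterDomain]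
    simp [Fin.forall_fin_succ]
  rw [hset]
  change _ ≤ ∫ z in counterDomain n N, (z.1 0 + z.2 0) / en (z.1 + z.2) ^ (n + 2)
  have hnonneg : 0 ≤ᵐ[volume.restrict (counterDomain n N)]
      fun z => (z.1 0 + z.2 0) / en (z.1 + z.2) ^ (n + 2) := by
    refine (ae_restrict_iff' (measurableSet_Icc.prod measurableSet_Icc)).2
      (ae_of_all _ fun z hz => ?_)
    obtain ⟨⟨⟨h1, -⟩, -⟩, ⟨h2, -⟩, -⟩ := mem_counterDomain.1 hz
    exact div_nonneg (by linarith) (pow_nonneg (Real.sqrt_nonneg _) _)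
  have hlower := setLIntegral_counterDomain_ge n N hN
  rw [← ofReal_integral_eq_lintegral_ofReal (integrableOn_counterDomain n N) hnonneg,
    ENNReal.ofReal_le_ofReal_iff (integral_nonneg_of_ae hnonneg)] at hlower
  refine le_trans ?_ hlower
  have hlog : Real.log (N / 4) ≤ Real.log (N / (3 / 2)) :=
    Real.log_le_log (by positivity) (by gcongr; norm_num)
  have hlog0 : 0 ≤ Real.log (N / 4) := Real.log_nonneg (by linarith)
  have h8 : ((8 : ℝ) ^ (n + 2))⁻¹ ≤ 1 / 4 := by
    rw [one_div]
    refine inv_anti₀ (by norm_num) ?_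
    calc (4 : ℝ) ≤ 8 ^ 1 := by norm_num
      _ ≤ 8 ^ (n + 2) := pow_le_pow_right₀ (by norm_num) (by omega)
  calc ((8 * ((n + 1 : ℕ) : ℝ)) ^ (n + 1 + 1))⁻¹ * N ^ (n + 1 - 1) * Real.log (N / 4)
      = ((8 : ℝ) ^ (n + 2))⁻¹ * N ^ n * ((((n : ℝ) + 1) ^ (n + 2))⁻¹ * Real.log (N / 4)) := by
        rw [mul_pow, mul_inv]
        push_cast
        ring
    _ ≤ 1 / 4 * N ^ n * ((((n : ℝ) + 1) ^ (n + 2))⁻¹ * Real.log (N / (3 / 2))) := by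
        gcongr

end SBL
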